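/- (Truncation resilience for P1.) If L ∈ valid A n B, Suc i < len L and cons M (trunc(L, Suc i)) ∈ valid A n B, then shop M = shop (ith(L, i)); i.e. a valid chain can be truncated only at an offer whose author is the author of the offer placed on top of the truncation. -/

import Mathlib

inductive agent : Type
  | Server : agent
  | Friend : ℕ → agent
  | Spy : agent
deriving DecidableEq

inductive msg : Type
  | Agent : agent → msg
  | Number : ℕ → msg
  | Nonce : ℕ → msg
  | Key : ℕ → msg
  | Hash : msg → msg
  | MPair : msg → msg → msg
  | Crypt : ℕ → msg → msg
deriving DecidableEq

inductive partsP (H : Set msg) : msg → Prop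
  | Inj : ∀ X, X ∈ H → partsP H X
  | Fst : ∀ X Y, partsP H (msg.MPair X Y) → partsP H X
  | Snd : ∀ X Y, partsP H (msg.MPair X Y) → partsP H Y
  | Body : ∀ K X, partsP H (msg.Crypt K X) → partsP H X

/-- `parts H`: sub-components of messages of `H`. -/
def parts (H : Set msg) : Set msg := {X | partsP H X}

inductive analzP (invKey : ℕ → ℕ) (H : Set msg) : msg → Prop
  | Inj : ∀ X, X ∈ H → analzP invKey H X
  | Fst : ∀ X Y, analzP invKey H (msg.MPair X Y) → analzP invKey H X
  | Snd : ∀ X Y, analzP invKey H (msg.MPair X Y) → analzP invKey H Y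
  | Decrypt : ∀ K X, analzP invKey H (msg.Crypt K X) →
      analzP invKey H (msg.Key (invKey K)) → analzP invKey H X

/-- `analz invKey H`: what can be obtained by decomposing and decrypting messages of `H`. -/
def analz (invKey : ℕ → ℕ) (H : Set msg) : Set msg := {X | analzP invKey H X}

inductive synthP (H : Set msg) : msg → Prop
  | Inj : ∀ X, X ∈ H → synthP H X
  | Ag : ∀ a, synthP H (msg.Agent a)
  | Num : ∀ n, synthP H (msg.Number n)
  | Hsh : ∀ X, synthP H X → synthP H (msg.Hash X)
  | Pr : ∀ X Y, synthP H X → synthP H Y → synthP H (msg.MPair X Y)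
  | Cry : ∀ K X, synthP H X → msg.Key K ∈ H → synthP H (msg.Crypt K X)

/-- `synth H`: messages that can be synthesized from `H`. -/
def synth (H : Set msg) : Set msg := {X | synthP H X}

inductive guardP (invKey : ℕ → ℕ) (n : ℕ) (Ks : Set ℕ) : msg → Prop
  | No_Nonce : ∀ X, msg.Nonce n ∉ parts {X} → guardP invKey n Ks X
  | Guard : ∀ K X, invKey K ∈ Ks → guardP invKey n Ks (msg.Crypt K X)
  | Cry : ∀ K X, guardP invKey n Ks X → guardP invKey n Ks (msg.Crypt K X)
  | Pr : ∀ X Y, guardP invKey n Ks X → guardP invKey n Ks Y →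
      guardP invKey n Ks (msg.MPair X Y)

/-- `guard n Ks`: messages in which `Nonce n` is guarded by the keys of `Ks`. -/
def guardMsg (invKey : ℕ → ℕ) (n : ℕ) (Ks : Set ℕ) : Set msg := {X | guardP invKey n Ks X}

/-- `Guard n Ks H`: every message of `H` lies in `guard n Ks`. -/
def Guard (invKey : ℕ → ℕ) (n : ℕ) (Ks : Set ℕ) (H : Set msg) : Prop :=
  ∀ X ∈ H, X ∈ guardMsg invKey n Ks
/-- The empty encoded list: a fixed atomic message. -/
def nilm : msg := msg.Number 0

/-- Cons on encoded lists. -/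
def consm (X L : msg) : msg := msg.MPair X L

/-- Head of an encoded list. -/
def headm : msg → msg
  | msg.MPair X _ => X
  | _ => nilm

/-- Tail of an encoded list. -/
def tailm : msg → msg
  | msg.MPair _ L => L
  | _ => nilm

/-- Length of an encoded list. -/
def lenm : msg → ℕ
  | msg.MPair _ L => lenm L + 1
  | _ => 0

/-- `ith L i` is the `i+1`-th element of `L`. -/
def ith : msg → ℕ → msg
  | L, 0 => headm L
  | L, i + 1 => ith (tailm L) i

/-- `repl L i M` is `L` with its `i+1`-th element replaced by `M`. -/
def repl : msg → ℕ → msg → msg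
  | msg.MPair _ L, 0, M => msg.MPair M L
  | msg.MPair X L, i + 1, M => msg.MPair X (repl L i M)
  | L, _, _ => L

/-- `insm L i M` is `L` with `M` inserted before the `i+1`-th element of `L`. -/
def insm : msg → ℕ → msg → msg
  | L, 0, M => msg.MPair M L
  | msg.MPair X L, i + 1, M => msg.MPair X (insm L i M)
  | L, _, _ => L

/-- `trunc L i` truncates the `i` first elements of `L`. -/
def trunc : msg → ℕ → msg
  | L, 0 => L
  | msg.MPair _ L, i + 1 => trunc L i
  | L, _ => L
/-- `sign B X = ⟨Agent B, X, Crypt (priK B) (Hash X)⟩`. -/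
def sign (invKey : ℕ → ℕ) (pubK : agent → ℕ) (B : agent) (X : msg) : msg :=
  msg.MPair (msg.Agent B) (msg.MPair X (msg.Crypt (invKey (pubK B)) (msg.Hash X)))

/-- The chaining relation of protocol P1. -/
def chain (invKey : ℕ → ℕ) (pubK : agent → ℕ) (B : agent) (ofr : ℕ) (A : agent)
    (L : msg) (C : agent) : msg :=
  sign invKey pubK B (msg.MPair (msg.Crypt (pubK A) (msg.Nonce ofr))
    (msg.Hash (msg.MPair (headm L) (msg.Agent C))))

/-- The start of the chaining relation. -/
def anchor (invKey : ℕ → ℕ) (pubK : agent → ℕ) (A : agent) (n : ℕ) (B : agent) : msg :=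
  chain invKey pubK A n A (consm nilm nilm) B

/-- The signer of an offer `chain B ofr A L C`, i.e. `Agent B`. -/
def shop (M : msg) : msg := headm M

/-- The designated next server of an offer `chain B ofr A L C`, i.e. `C`. -/
def next_shop : msg → agent
  | msg.MPair _ (msg.MPair (msg.MPair _ (msg.Hash (msg.MPair _ (msg.Agent C)))) _) => C
  | _ => agent.Server
/-- Valid chains of offers for protocol P1. -/
inductive validP (invKey : ℕ → ℕ) (pubK : agent → ℕ) (A : agent) (n : ℕ) (B : agent) :
    msg → Prop
  | Req : validP invKey pubK A n B (consm (anchor invKey pubK A n B) nilm)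
  | Prop : ∀ L ofr C, validP invKey pubK A n B L →
      validP invKey pubK A n B
        (consm (chain invKey pubK (next_shop (headm L)) ofr A L C) L)

def valid (invKey : ℕ → ℕ) (pubK : agent → ℕ) (A : agent) (n : ℕ) (B : agent) : Set msg :=
  {L | validP invKey pubK A n B L}

/-!
In a valid list with at least two offers, the author of the top offer is the next server designated
by the offer below it, so it is determined by the tail of the list. Both `consm M (trunc L (i + 1))`
and the suffix `trunc L i` of `L` are valid lists with the nonempty tail `trunc L (i + 1)`; hence
their top offers `M` and `ith L i` have the same author.
-/

theorem exists_eq_consm_of_lenm_pos {L : msg} (hL : 0 < lenm L) : ∃ X L', L = consm X L' := by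
  cases L with
  | MPair X L' => exact ⟨X, L', rfl⟩
  | _ => exact absurd hL (lt_irrefl 0)

theorem lenm_trunc_pos {L : msg} {i : ℕ} (hi : i < lenm L) : 0 < lenm (trunc L i) := by
  induction i generalizing L with
  | zero => simpa only [trunc] using hi
  | succ i ih =>
    obtain ⟨X, L', rfl⟩ := exists_eq_consm_of_lenm_pos (Nat.zero_lt_of_lt hi)
    exact ih (Nat.lt_of_succ_lt_succ hi)

theorem trunc_eq_consm {L : msg} {i : ℕ} (hi : i < lenm L) :
    trunc L i = consm (ith L i) (trunc L (i + 1)) := by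
  induction i generalizing L with
  | zero =>
    obtain ⟨X, L', rfl⟩ := exists_eq_consm_of_lenm_pos hi
    simp only [consm, trunc, ith, headm]
  | succ i ih =>
    obtain ⟨X, L', rfl⟩ := exists_eq_consm_of_lenm_pos (Nat.zero_lt_of_lt hi)
    exact ih (Nat.lt_of_succ_lt_succ hi)

section Valid

variable {invKey : ℕ → ℕ} {pubK : agent → ℕ} {A B : agent} {n : ℕ} {L M : msg}

theorem consm_mem_valid_iff :
    consm M L ∈ valid invKey pubK A n B ↔
      (M = anchor invKey pubK A n B ∧ L = nilm) ∨
        L ∈ valid invKey pubK A n B ∧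
          ∃ ofr C, M = chain invKey pubK (next_shop (headm L)) ofr A L C := by
  constructor
  · rintro (_ | ⟨_, ofr, C, hL⟩)
    · exact .inl ⟨rfl, rfl⟩
    · exact .inr ⟨hL, ofr, C, rfl⟩
  · rintro (⟨rfl, rfl⟩ | ⟨hL, ofr, C, rfl⟩)
    · exact .Req
    · exact .Prop L ofr C hL

theorem exists_eq_chain_of_consm_mem_valid (h : consm M L ∈ valid invKey pubK A n B)
    (hL : 0 < lenm L) :
    L ∈ valid invKey pubK A n B ∧
      ∃ ofr C, M = chain invKey pubK (next_shop (headm L)) ofr A L C := by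
  obtain ⟨-, rfl⟩ | hchain := consm_mem_valid_iff.mp h
  · exact absurd hL (lt_irrefl 0)
  · exact hchain

theorem shop_eq_next_shop_of_consm_mem_valid (h : consm M L ∈ valid invKey pubK A n B)
    (hL : 0 < lenm L) : shop M = msg.Agent (next_shop (headm L)) := by
  obtain ⟨-, ofr, C, rfl⟩ := exists_eq_chain_of_consm_mem_valid h hL
  rfl

theorem trunc_mem_valid (hL : L ∈ valid invKey pubK A n B) {i : ℕ} (hi : i < lenm L) :
    trunc L i ∈ valid invKey pubK A n B := by
  induction i with
  | zero => simpa only [trunc] using hL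
  | succ i ih =>
    have hi' : i < lenm L := Nat.lt_of_succ_lt hi
    have hcons : consm (ith L i) (trunc L (i + 1)) ∈ valid invKey pubK A n B :=
      trunc_eq_consm hi' ▸ ih hi'
    exact (exists_eq_chain_of_consm_mem_valid hcons (lenm_trunc_pos hi)).1

end Valid

/-- Truncation resilience for P1: a valid chain can be truncated only at an
offer whose author is the author of the offer placed on top of the truncation. -/
theorem truncation_resilience
    (invKey : ℕ → ℕ) (pubK : agent → ℕ)
    (hinv : ∀ K, invKey (invKey K) = K)
    (A B : agent) (n : ℕ) (L M : msg) (i : ℕ)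
    (hL : L ∈ valid invKey pubK A n B)
    (hlen : i + 1 < lenm L)
    (htr : consm M (trunc L (i + 1)) ∈ valid invKey pubK A n B) :
    shop M = shop (ith L i) := by
  have hpos : 0 < lenm (trunc L (i + 1)) := lenm_trunc_pos hlen
  have hi : i < lenm L := Nat.lt_of_succ_lt hlen
  have hsuffix : consm (ith L i) (trunc L (i + 1)) ∈ valid invKey pubK A n B :=
    trunc_eq_consm hi ▸ trunc_mem_valid hL hi
  calc
    shop M = msg.Agent (next_shop (headm (trunc L (i + 1)))) :=
      shop_eq_next_shop_of_consm_mem_valid htr hpos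
    _ = shop (ith L i) := (shop_eq_next_shop_of_consm_mem_valid hsuffix hpos).symm
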